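/- Let ω be a state of a finite-dimensional tripartite system ABC and ω^ε = (1−ε)ω + ε·ω_AB ⊗ ω_C for ε ∈ (0,1). Then I(A:C|B)_{ω^ε} ≤ (1−ε)·I(A:C|B)_ω. -/

import Mathlib

open Matrix
open scoped ComplexOrder

noncomputable section

/-- The von Neumann entropy, extended to the cone of positive trace-class operators by
`H(ρ) = Tr η(ρ) − η(Tr ρ)` with `η(x) = −x log x` (computed spectrally). -/
def vnEnt {n : Type*} [Fintype n] [DecidableEq n] (ρ : Matrix n n ℂ) : ℝ :=
  if h : ρ.IsHermitian then
    (∑ i, Real.negMulLog (h.eigenvalues i)) - Real.negMulLog (∑ i, h.eigenvalues i)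
  else 0

/-- A state (density operator): positive semidefinite with unit trace. -/
def IsState {n : Type*} [Fintype n] (ρ : Matrix n n ℂ) : Prop :=
  ρ.PosSemidef ∧ ρ.trace = 1

section Tripartite

variable {a b c : Type*} [Fintype a] [DecidableEq a] [Fintype b] [DecidableEq b]
  [Fintype c] [DecidableEq c]

/-- Marginal `ω_A` of a tripartite operator. -/
def mA (ω : Matrix (a × b × c) (a × b × c) ℂ) : Matrix a a ℂ :=
  Matrix.of fun i j => ∑ k : b × c, ω (i, k) (j, k)

/-- Marginal `ω_B`. -/
def mB (ω : Matrix (a × b × c) (a × b × c) ℂ) : Matrix b b ℂ :=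
  Matrix.of fun i j => ∑ k : a, ∑ l : c, ω (k, i, l) (k, j, l)

/-- Marginal `ω_C`. -/
def mC (ω : Matrix (a × b × c) (a × b × c) ℂ) : Matrix c c ℂ :=
  Matrix.of fun i j => ∑ k : a, ∑ l : b, ω (k, l, i) (k, l, j)

/-- Marginal `ω_AB`. -/
def mAB (ω : Matrix (a × b × c) (a × b × c) ℂ) : Matrix (a × b) (a × b) ℂ :=
  Matrix.of fun p q => ∑ k : c, ω (p.1, p.2, k) (q.1, q.2, k)

/-- Marginal `ω_BC`. -/
def mBC (ω : Matrix (a × b × c) (a × b × c) ℂ) : Matrix (b × c) (b × c) ℂ :=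
  Matrix.of fun p q => ∑ k : a, ω (k, p) (k, q)

/-- Marginal `ω_AC`. -/
def mAC (ω : Matrix (a × b × c) (a × b × c) ℂ) : Matrix (a × c) (a × c) ℂ :=
  Matrix.of fun p q => ∑ k : b, ω (p.1, k, p.2) (q.1, k, q.2)

/-- Conditional mutual information `I(A:C|B)_ω = H(ω_AB)+H(ω_BC)−H(ω_ABC)−H(ω_B)`. -/
def cmi (ω : Matrix (a × b × c) (a × b × c) ℂ) : ℝ :=
  vnEnt (mAB ω) + vnEnt (mBC ω) - vnEnt ω - vnEnt (mB ω)

end Tripartite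

/-- The product operator `ω_AB ⊗ ω_C` regarded on `A ⊗ (B ⊗ C)`. -/
def prodABC {a b c : Type*} [Fintype a] [DecidableEq a] [Fintype b] [DecidableEq b]
    [Fintype c] [DecidableEq c] (ω : Matrix (a × b × c) (a × b × c) ℂ) :
    Matrix (a × b × c) (a × b × c) ℂ :=
  Matrix.of fun p q => mAB ω (p.1, p.2.1) (q.1, q.2.1) * mC ω p.2.2 q.2.2

/-!
The conditional mutual information is `I(A:C|B) = H(A|B) - H(A|BC)`. The states `ω` and
`ω_AB ⊗ ω_C` have the same marginal on `AB`, so `H(A|B)` is constant on the segment joining them;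
as `H(A|BC)` is concave and `I(A:C|B)` vanishes at `ω_AB ⊗ ω_C`, the bound is convexity along this
segment.

Concavity of the conditional entropy follows from joint convexity of the relative entropy and
`H(A|B)_ρ = -D(ρ ‖ 1 ⊗ ρ_B)`. Joint convexity itself is read off the representation
`D(A ‖ B) = Tr (A - B) + ∫₀¹ (1 - s) ⟨A - B, (s L_A + (1 - s) R_B)⁻¹ (A - B)⟩ ds`, in which each
quadratic form is a supremum of functionals linear in `(A, B)`.
-/

open scoped Kronecker

section PartialTrace

variable {R S m n l : Type*} [Fintype m]

/-- The partial trace over the left tensor factor of an operator on `m ⊗ n`. -/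
def traceLeft [AddCommMonoid R] (M : Matrix (m × n) (m × n) R) : Matrix n n R :=
  of fun i j => ∑ k, M (k, i) (k, j)

lemma traceLeft_add [AddCommMonoid R] (M N : Matrix (m × n) (m × n) R) :
    traceLeft (M + N) = traceLeft M + traceLeft N := by
  ext i j
  simp [traceLeft, Finset.sum_add_distrib]

lemma traceLeft_smul [AddCommMonoid R] [DistribSMul S R] (r : S)
    (M : Matrix (m × n) (m × n) R) : traceLeft (r • M) = r • traceLeft M := by
  ext i j
  simp [traceLeft, Finset.smul_sum]

lemma traceLeft_eq_sum_submatrix [AddCommMonoid R] (M : Matrix (m × n) (m × n) R) :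
    traceLeft M = ∑ k, M.submatrix (Prod.mk k) (Prod.mk k) := by
  ext i j
  simp [traceLeft, Matrix.sum_apply]

lemma trace_traceLeft [AddCommMonoid R] [Fintype n] (M : Matrix (m × n) (m × n) R) :
    (traceLeft M).trace = M.trace := by
  simp only [trace, diag_apply, traceLeft, of_apply]
  rw [Finset.sum_comm, Fintype.sum_prod_type (γ := R)]

lemma traceLeft_mul_one_kronecker [NonAssocSemiring R] [DecidableEq m] [Fintype n]
    (M : Matrix (m × n) (m × n) R) (N : Matrix n n R) :
    traceLeft (M * ((1 : Matrix m m R) ⊗ₖ N)) = traceLeft M * N := by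
  ext i j
  simp only [traceLeft, of_apply, Matrix.mul_apply, kroneckerMap_apply, Fintype.sum_prod_type,
    one_apply, ite_mul, mul_ite, one_mul, zero_mul, mul_zero, Finset.sum_mul]
  rw [Finset.sum_comm (γ := n)]
  simp

variable {𝕜 : Type*} [RCLike 𝕜]

lemma posSemidef_traceLeft {ρ : Matrix (m × n) (m × n) 𝕜} (hρ : ρ.PosSemidef) :
    (traceLeft ρ).PosSemidef := by
  rw [traceLeft_eq_sum_submatrix]
  exact posSemidef_sum _ fun k _ => hρ.submatrix _

variable [Fintype n] [DecidableEq m]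

lemma conjTranspose_one_kronecker_mul_mul_eq_zero [Finite l] {ρ : Matrix (m × n) (m × n) 𝕜}
    (hρ : ρ.PosSemidef) {X : Matrix n l 𝕜} (hX : traceLeft ρ * X = 0) :
    ((1 : Matrix m m 𝕜) ⊗ₖ X)ᴴ * ρ * ((1 : Matrix m m 𝕜) ⊗ₖ X) = 0 := by
  have := Fintype.ofFinite l
  rw [← (hρ.conjTranspose_mul_mul_same _).trace_eq_zero_iff, Matrix.mul_assoc, trace_mul_comm,
    Matrix.mul_assoc, conjTranspose_kronecker, conjTranspose_one, ← mul_kronecker_mul,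
    Matrix.one_mul, ← trace_traceLeft, traceLeft_mul_one_kronecker, ← Matrix.mul_assoc, hX,
    Matrix.zero_mul, trace_zero]

lemma mulVec_eq_zero_of_one_kronecker_traceLeft {ρ : Matrix (m × n) (m × n) 𝕜}
    (hρ : ρ.PosSemidef) {v : m × n → 𝕜}
    (hv : ((1 : Matrix m m 𝕜) ⊗ₖ traceLeft ρ) *ᵥ v = 0) : ρ *ᵥ v = 0 := by
  obtain ⟨Q, rfl⟩ := vec_bijective.surjective v
  have hQ : traceLeft ρ * Q = 0 := by rwa [← vec_mul_eq_mulVec, vec_eq_zero_iff] at hv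
  rw [← hρ.dotProduct_mulVec_zero_iff, ← Matrix.mul_one Q, vec_mul_eq_mulVec, star_mulVec,
    ← dotProduct_mulVec, mulVec_mulVec, mulVec_mulVec,
    conjTranspose_one_kronecker_mul_mul_eq_zero hρ hQ, zero_mulVec, dotProduct_zero]

end PartialTrace

section SpectralCoordinates

variable {n : Type*} [Fintype n] [DecidableEq n] {A B : Matrix n n ℂ}

lemma mul_cfc_log (hA : A.IsHermitian) :
    A * cfc Real.log A = cfc (fun x => x * Real.log x) A := by
  rw [cfc_mul (fun x => x) Real.log A continuousOn_id (finite_real_spectrum.continuousOn _),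
    cfc_id' ℝ A]

lemma re_trace_cfc (hA : A.IsHermitian) (f : ℝ → ℝ) :
    (cfc f A).trace.re = ∑ i, f (hA.eigenvalues i) := by
  rw [hA.cfc_eq, IsHermitian.cfc, Unitary.conjStarAlgAut_apply, trace_mul_cycle,
    Unitary.coe_star_mul_self, one_mul, trace_diagonal, Complex.re_sum]
  rfl

lemma re_trace_eq_sum_eigenvalues (hA : A.IsHermitian) :
    A.trace.re = ∑ i, hA.eigenvalues i := by
  simpa only [cfc_id' ℝ A] using re_trace_cfc hA fun x => x

/-- The matrix coefficients `⟨uᵢ, Y vⱼ⟩` of `Y` between the eigenbases `u` of `A` and `v` of `B`. -/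
def eigenCoord (hA : A.IsHermitian) (hB : B.IsHermitian) (Y : Matrix n n ℂ) : Matrix n n ℂ :=
  star (hA.eigenvectorUnitary : Matrix n n ℂ) * Y * (hB.eigenvectorUnitary : Matrix n n ℂ)

lemma eigenCoord_surjective (hA : A.IsHermitian) (hB : B.IsHermitian) :
    Function.Surjective (eigenCoord hA hB) := fun Z =>
  ⟨hA.eigenvectorUnitary * Z * star (hB.eigenvectorUnitary : Matrix n n ℂ), by
    simp [eigenCoord, mul_assoc, ← mul_assoc (star (hA.eigenvectorUnitary : Matrix n n ℂ))]⟩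

lemma eigenCoord_cfc_mul_mul_cfc (hA : A.IsHermitian) (hB : B.IsHermitian) (f g : ℝ → ℝ)
    (Y : Matrix n n ℂ) : eigenCoord hA hB (cfc f A * Y * cfc g B) =
      diagonal (fun i => (f (hA.eigenvalues i) : ℂ)) * eigenCoord hA hB Y *
        diagonal (fun j => (g (hB.eigenvalues j) : ℂ)) := by
  simp only [hA.cfc_eq, hB.cfc_eq, IsHermitian.cfc, Unitary.conjStarAlgAut_apply, eigenCoord,
    mul_assoc, Unitary.coe_star_mul_self, mul_one]
  simp only [← mul_assoc, Unitary.coe_star_mul_self, one_mul]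
  rfl

lemma trace_conjTranspose_eigenCoord_mul_eigenCoord (hA : A.IsHermitian) (hB : B.IsHermitian)
    (Y Z : Matrix n n ℂ) : ((eigenCoord hA hB Y)ᴴ * eigenCoord hA hB Z).trace = (Yᴴ * Z).trace := by
  have hU := Unitary.mul_star_self_of_mem hA.eigenvectorUnitary.2
  have hV := Unitary.mul_star_self_of_mem hB.eigenvectorUnitary.2
  simp only [eigenCoord, ← star_eq_conjTranspose, star_mul, star_star]
  rw [← mul_assoc, trace_mul_comm]
  simp only [← mul_assoc, hV, one_mul]
  rw [mul_assoc (star Y), hU, mul_one]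

lemma trace_conjTranspose_mul_cfc_mul_mul_cfc (hA : A.IsHermitian) (hB : B.IsHermitian)
    (f g : ℝ → ℝ) (Y Z : Matrix n n ℂ) : (Yᴴ * (cfc f A * Z * cfc g B)).trace =
      ∑ i, ∑ j, ((f (hA.eigenvalues i) * g (hB.eigenvalues j) : ℝ) : ℂ) *
        (star (eigenCoord hA hB Y i j) * eigenCoord hA hB Z i j) := by
  rw [← trace_conjTranspose_eigenCoord_mul_eigenCoord hA hB, eigenCoord_cfc_mul_mul_cfc,
    Finset.sum_comm]
  refine Finset.sum_congr rfl fun j _ => ?_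
  rw [diag_apply, Matrix.mul_apply]
  refine Finset.sum_congr rfl fun i _ => ?_
  rw [conjTranspose_apply, mul_diagonal, diagonal_mul]
  push_cast
  ring

lemma re_trace_cfc_mul_cfc (hA : A.IsHermitian) (hB : B.IsHermitian) (f g : ℝ → ℝ) :
    (cfc f A * cfc g B).trace.re = ∑ i, ∑ j,
      f (hA.eigenvalues i) * g (hB.eigenvalues j) *
        Complex.normSq (eigenCoord hA hB 1 i j) := by
  have h := trace_conjTranspose_mul_cfc_mul_mul_cfc hA hB f g 1 1
  rw [conjTranspose_one, one_mul, mul_one] at h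
  simp only [h, Complex.re_sum, Complex.re_ofReal_mul, Complex.star_def,
    Complex.normSq_eq_conj_mul_self.symm, Complex.ofReal_re]

lemma eigenvalues_eq_zero_of_eigenCoord_one_ne_zero (hA : A.IsHermitian) (hB : B.IsHermitian)
    (hker : ∀ v, B *ᵥ v = 0 → A *ᵥ v = 0) {i j : n} (hij : eigenCoord hA hB 1 i j ≠ 0)
    (hj : hB.eigenvalues j = 0) : hA.eigenvalues i = 0 := by
  have hv : A *ᵥ (hB.eigenvectorBasis j).ofLp = 0 :=
    hker _ (by rw [hB.mulVec_eigenvectorBasis, hj, zero_smul])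
  have hcol : (A * (hB.eigenvectorUnitary : Matrix n n ℂ)) *ᵥ Pi.single j 1 = 0 := by
    rw [← mulVec_mulVec, hB.eigenvectorUnitary_mulVec, hv]
  have hzero : eigenCoord hA hB A i j = 0 := by
    rw [eigenCoord, mul_assoc, ← col_apply (star _ * _), ← mulVec_single_one, ← mulVec_mulVec,
      hcol, mulVec_zero, Pi.zero_apply]
  have hmul := congrFun₂ (eigenCoord_cfc_mul_mul_cfc hA hB id (fun _ => 1) 1) i j
  rw [cfc_id ℝ A, cfc_const_one ℝ B, mul_one, mul_one, hzero] at hmul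
  simpa [hij] using hmul

end SpectralCoordinates

section ChiSquare

variable {n : Type*} [Fintype n] {A B : Matrix n n ℂ} {s : ℝ}

-- Completing the square: the maximum is attained at `z = δ / d * w`.
lemma isGreatest_range_two_mul_re_sub_mul_normSq {δ d : ℝ} (hd : 0 ≤ d) (hδ : d = 0 → δ = 0)
    (w : ℂ) : IsGreatest (Set.range fun z : ℂ => 2 * δ * (star z * w).re - d * Complex.normSq z)
      (δ ^ 2 / d * Complex.normSq w) := by
  rcases hd.eq_or_lt with rfl | hd
  · simp [hδ rfl]
  have square (z : ℂ) : δ ^ 2 / d * Complex.normSq w -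
      (2 * δ * (star z * w).re - d * Complex.normSq z) =
        d * Complex.normSq (z - (δ / d : ℝ) * w) := by
    simp only [Complex.normSq_apply, Complex.mul_re, Complex.mul_im, Complex.sub_re,
      Complex.sub_im, Complex.star_def, Complex.conj_re, Complex.conj_im, Complex.ofReal_re,
      Complex.ofReal_im]
    field_simp
    ring
  refine ⟨⟨(δ / d : ℝ) * w, ?_⟩, ?_⟩
  · have h := square ((δ / d : ℝ) * w)
    rwa [sub_self, map_zero, mul_zero, sub_eq_zero, eq_comm] at h
  · rintro _ ⟨z, rfl⟩
    exact sub_nonneg.1 ((square z).symm ▸ mul_nonneg hd.le (Complex.normSq_nonneg _))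

/-- The functional of `Y` whose supremum is the quadratic form
`⟨A - B, (s L_A + (1 - s) R_B)⁻¹ (A - B)⟩`, with `L_A` and `R_B` the left and right
multiplications; it is linear in `(A, B)`. -/
def chiSqForm (s : ℝ) (A B Y : Matrix n n ℂ) : ℝ :=
  (2 * trace (Yᴴ * (A - B)) - s * trace (Yᴴ * A * Y) - (1 - s) * trace (Yᴴ * Y * B)).re

/-- The quantum `χ²`-type divergence `⟨A - B, (s L_A + (1 - s) R_B)⁻¹ (A - B)⟩`, in variational
form. -/
def chiSqDiv (s : ℝ) (A B : Matrix n n ℂ) : ℝ :=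
  ⨆ Y, chiSqForm s A B Y

lemma chiSqForm_smul_add_smul (s p q : ℝ) (A₁ B₁ A₂ B₂ Y : Matrix n n ℂ) :
    chiSqForm s (p • A₁ + q • A₂) (p • B₁ + q • B₂) Y =
      p * chiSqForm s A₁ B₁ Y + q * chiSqForm s A₂ B₂ Y := by
  simp only [chiSqForm, mul_sub, mul_add, add_mul, Matrix.mul_smul, Matrix.smul_mul, trace_add,
    trace_sub, trace_smul, Complex.real_smul, Complex.add_re, Complex.sub_re, Complex.mul_re,
    Complex.ofReal_re, Complex.ofReal_im, Complex.mul_im, Complex.sub_im,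
    Complex.one_re, Complex.one_im, Complex.re_ofNat, Complex.im_ofNat]
  ring

lemma chiSqForm_eq_sum [DecidableEq n] (hA : A.IsHermitian) (hB : B.IsHermitian) (s : ℝ)
    (Y : Matrix n n ℂ) :
    chiSqForm s A B Y = ∑ i, ∑ j,
      (2 * (hA.eigenvalues i - hB.eigenvalues j) *
          (star (eigenCoord hA hB Y i j) * eigenCoord hA hB 1 i j).re -
        (s * hA.eigenvalues i + (1 - s) * hB.eigenvalues j) *
          Complex.normSq (eigenCoord hA hB Y i j)) := by
  have left (Z : Matrix n n ℂ) : (Yᴴ * (A * Z)).trace = ∑ i, ∑ j, (hA.eigenvalues i : ℂ) *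
      (star (eigenCoord hA hB Y i j) * eigenCoord hA hB Z i j) := by
    simpa [cfc_id' ℝ A, cfc_const_one ℝ B]
      using trace_conjTranspose_mul_cfc_mul_mul_cfc hA hB (fun x => x) (fun _ => 1) Y Z
  have right (Z : Matrix n n ℂ) : (Yᴴ * (Z * B)).trace = ∑ i, ∑ j, (hB.eigenvalues j : ℂ) *
      (star (eigenCoord hA hB Y i j) * eigenCoord hA hB Z i j) := by
    simpa [cfc_id' ℝ B, cfc_const_one ℝ A]
      using trace_conjTranspose_mul_cfc_mul_mul_cfc hA hB (fun _ => 1) (fun x => x) Y Z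
  have hA1 := left 1
  have hB1 := right 1
  rw [mul_one] at hA1
  rw [one_mul] at hB1
  rw [chiSqForm, mul_sub, trace_sub, hA1, hB1, Matrix.mul_assoc, left, Matrix.mul_assoc, right]
  simp only [Finset.mul_sum, ← Finset.sum_sub_distrib, Complex.re_sum]
  refine Finset.sum_congr rfl fun i _ => Finset.sum_congr rfl fun j _ => ?_
  simp only [RCLike.star_def, Complex.sub_re, Complex.mul_re, Complex.re_ofNat, Complex.ofReal_re,
    Complex.conj_re, Complex.conj_im, neg_mul, sub_neg_eq_add, Complex.ofReal_im, Complex.mul_im,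
    zero_mul, sub_zero, Complex.im_ofNat, Complex.sub_im, add_zero, Complex.one_re,
    Complex.one_im, sub_self, Complex.normSq_apply]
  ring

lemma isGreatest_range_chiSqForm [DecidableEq n] (hA : A.PosSemidef)
    (hB : B.PosSemidef) (hs : s ∈ Set.Ioo (0 : ℝ) 1) :
    IsGreatest (Set.range (chiSqForm s A B)) (∑ i, ∑ j,
      (hA.1.eigenvalues i - hB.1.eigenvalues j) ^ 2 /
          (s * hA.1.eigenvalues i + (1 - s) * hB.1.eigenvalues j) *
        Complex.normSq (eigenCoord hA.1 hB.1 1 i j)) := by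
  have hx i : 0 ≤ s * hA.1.eigenvalues i := mul_nonneg hs.1.le (hA.eigenvalues_nonneg i)
  have hy j : 0 ≤ (1 - s) * hB.1.eigenvalues j :=
    mul_nonneg (sub_nonneg.2 hs.2.le) (hB.eigenvalues_nonneg j)
  have hmax (i j) := isGreatest_range_two_mul_re_sub_mul_normSq
    (δ := hA.1.eigenvalues i - hB.1.eigenvalues j) (add_nonneg (hx i) (hy j))
    (fun h => by
      obtain ⟨hi, hj⟩ := (add_eq_zero_iff_of_nonneg (hx i) (hy j)).1 h
      rw [(mul_eq_zero_iff_left hs.1.ne').1 hi,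
        (mul_eq_zero_iff_left (sub_pos.2 hs.2).ne').1 hj, sub_self])
    (eigenCoord hA.1 hB.1 1 i j)
  constructor
  · choose Z hZ using fun i j => (hmax i j).1
    obtain ⟨Y, hY⟩ := eigenCoord_surjective hA.1 hB.1 (of Z)
    refine ⟨Y, ?_⟩
    simp only [chiSqForm_eq_sum hA.1 hB.1, hY, of_apply, ← hZ]
  · rintro _ ⟨Y, rfl⟩
    rw [chiSqForm_eq_sum hA.1 hB.1]
    exact Finset.sum_le_sum fun i _ => Finset.sum_le_sum fun j _ =>
      (hmax i j).2 (Set.mem_range_self _)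

lemma chiSqDiv_eq_sum [DecidableEq n] (hA : A.PosSemidef) (hB : B.PosSemidef)
    (hs : s ∈ Set.Ioo (0 : ℝ) 1) :
    chiSqDiv s A B = ∑ i, ∑ j, (hA.1.eigenvalues i - hB.1.eigenvalues j) ^ 2 /
      (s * hA.1.eigenvalues i + (1 - s) * hB.1.eigenvalues j) *
        Complex.normSq (eigenCoord hA.1 hB.1 1 i j) :=
  (isGreatest_range_chiSqForm hA hB hs).csSup_eq

lemma convexOn_chiSqDiv (hs : s ∈ Set.Ioo (0 : ℝ) 1) :
    ConvexOn ℝ {P : Matrix n n ℂ × Matrix n n ℂ | P.1.PosSemidef ∧ P.2.PosSemidef}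
      fun P => chiSqDiv s P.1 P.2 := by
  classical
  refine ⟨fun P hP Q hQ p q hp hq _ =>
    ⟨(hP.1.smul hp).add (hQ.1.smul hq), (hP.2.smul hp).add (hQ.2.smul hq)⟩, ?_⟩
  rintro P hP Q hQ p q hp hq -
  refine ciSup_le fun Y => ?_
  rw [Prod.fst_add, Prod.snd_add, Prod.smul_fst, Prod.smul_snd, Prod.smul_fst, Prod.smul_snd,
    chiSqForm_smul_add_smul]
  have le_div {R : Matrix n n ℂ × Matrix n n ℂ} (hR : R.1.PosSemidef ∧ R.2.PosSemidef) :
      chiSqForm s R.1 R.2 Y ≤ chiSqDiv s R.1 R.2 :=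
    le_ciSup (isGreatest_range_chiSqForm hR.1 hR.2 hs).bddAbove Y
  exact add_le_add (mul_le_mul_of_nonneg_left (le_div hP) hp)
    (mul_le_mul_of_nonneg_left (le_div hQ) hq)

end ChiSquare

section RelativeEntropy

open MeasureTheory

section ScalarIntegral

variable {x y : ℝ}

lemma mul_add_one_sub_mul_pos (hx : 0 ≤ x) (hy : 0 < y) {s : ℝ} (hs : s ∈ Set.Ico (0 : ℝ) 1) :
    0 < s * x + (1 - s) * y :=
  add_pos_of_nonneg_of_pos (mul_nonneg hs.1 hx) (mul_pos (sub_pos.2 hs.2) hy)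

lemma continuousOn_mul_log_segment_sub (hx : 0 ≤ x) (hy : 0 < y) :
    ContinuousOn (fun s => x * Real.log (s * x + (1 - s) * y) - s * (x - y)) (Set.Icc 0 1) := by
  rcases hx.eq_or_lt with rfl | hx
  · simp only [zero_mul]
    fun_prop
  · refine (continuousOn_const.mul (ContinuousOn.log (by fun_prop) fun s hs => ?_)).sub
      (by fun_prop)
    rcases hs.2.eq_or_lt with rfl | hs1
    · simpa using hx.ne'
    · exact (mul_add_one_sub_mul_pos hx.le hy ⟨hs.1, hs1⟩).ne'

lemma hasDerivAt_mul_log_segment_sub {s : ℝ} (h : s * x + (1 - s) * y ≠ 0) :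
    HasDerivAt (fun s => x * Real.log (s * x + (1 - s) * y) - s * (x - y))
      ((1 - s) * ((x - y) ^ 2 / (s * x + (1 - s) * y))) s := by
  have hseg : HasDerivAt (fun s : ℝ => s * x + (1 - s) * y) (1 * x + (0 - 1) * y) s :=
    ((hasDerivAt_id s).mul_const x).add
      (((hasDerivAt_const s 1).sub (hasDerivAt_id s)).mul_const y)
  refine (((hseg.log h).const_mul x).sub ((hasDerivAt_id s).mul_const (x - y))).congr_deriv ?_
  rw [mul_div_assoc', mul_div_assoc', div_sub' h, div_left_inj' h]
  ring

lemma intervalIntegrable_one_sub_mul_sq_div (hx : 0 ≤ x) (hy : 0 ≤ y) (hxy : y = 0 → x = 0) :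
    IntervalIntegrable (fun s => (1 - s) * ((x - y) ^ 2 / (s * x + (1 - s) * y)))
      volume 0 1 := by
  rcases hy.eq_or_lt with rfl | hy
  · simp [hxy rfl]
  refine intervalIntegral.intervalIntegrable_deriv_of_nonneg
    (g := fun s => x * Real.log (s * x + (1 - s) * y) - s * (x - y)) ?_ ?_ ?_
  · rw [Set.uIcc_of_le zero_le_one]
    exact continuousOn_mul_log_segment_sub hx hy
  all_goals
    intro s hs
    rw [min_eq_left zero_le_one, max_eq_right zero_le_one] at hs
    have hpos := mul_add_one_sub_mul_pos hx hy (Set.Ioo_subset_Ico_self hs)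
  · exact hasDerivAt_mul_log_segment_sub hpos.ne'
  · exact mul_nonneg (sub_nonneg.2 hs.2.le) (div_nonneg (sq_nonneg _) hpos.le)

lemma integral_one_sub_mul_sq_div (hx : 0 ≤ x) (hy : 0 ≤ y) (hxy : y = 0 → x = 0) :
    ∫ s in (0 : ℝ)..1, (1 - s) * ((x - y) ^ 2 / (s * x + (1 - s) * y)) =
      x * (Real.log x - Real.log y) - (x - y) := by
  have hint := intervalIntegrable_one_sub_mul_sq_div hx hy hxy
  rcases hy.eq_or_lt with rfl | hy
  · simp [hxy rfl]
  rw [intervalIntegral.integral_eq_sub_of_hasDerivAt_of_le zero_le_one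
    (continuousOn_mul_log_segment_sub hx hy)
    (fun s hs => hasDerivAt_mul_log_segment_sub
      (mul_add_one_sub_mul_pos hx hy (Set.Ioo_subset_Ico_self hs)).ne') hint]
  ring_nf

end ScalarIntegral

variable {n : Type*} [Fintype n] {A B : Matrix n n ℂ} {P : Matrix n n ℂ × Matrix n n ℂ}

/-- The Umegaki relative entropy `Tr A (log A - log B)`. Since `Real.log 0 = 0`, it has its usual
meaning only when `ker B ⊆ ker A`; otherwise the relative entropy is infinite. -/
def relEntropy [DecidableEq n] (A B : Matrix n n ℂ) : ℝ :=
  (trace (A * (cfc Real.log A - cfc Real.log B))).re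

/-- The pairs `(A, B)` of positive semidefinite matrices with `ker B ⊆ ker A`, on which the
relative entropy is finite. -/
def dominatedPairs (n : Type*) [Fintype n] : Set (Matrix n n ℂ × Matrix n n ℂ) :=
  {P | P.1.PosSemidef ∧ P.2.PosSemidef ∧ ∀ v, P.2 *ᵥ v = 0 → P.1 *ᵥ v = 0}

lemma convex_dominatedPairs : Convex ℝ (dominatedPairs n) := by
  rw [convex_iff_forall_pos]
  rintro P ⟨hP₁, hP₂, hP⟩ Q ⟨hQ₁, hQ₂, hQ⟩ p q hp hq -
  refine ⟨(hP₁.smul hp.le).add (hQ₁.smul hq.le), (hP₂.smul hp.le).add (hQ₂.smul hq.le),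
    fun v hv => ?_⟩
  have hv' : star v ⬝ᵥ (p • P.2 + q • Q.2) *ᵥ v = 0 := by
    rw [show p • P.2 + q • Q.2 = (p • P + q • Q).2 from rfl, hv, dotProduct_zero]
  rw [add_mulVec, dotProduct_add, add_eq_zero_iff_of_nonneg
    ((hP₂.smul hp.le).dotProduct_mulVec_nonneg v) ((hQ₂.smul hq.le).dotProduct_mulVec_nonneg v),
    smul_mulVec, smul_mulVec, dotProduct_smul, dotProduct_smul, smul_eq_zero_iff_right hp.ne',
    smul_eq_zero_iff_right hq.ne', hP₂.dotProduct_mulVec_zero_iff,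
    hQ₂.dotProduct_mulVec_zero_iff] at hv'
  simp [add_mulVec, smul_mulVec, hP v hv'.1, hQ v hv'.2]

section EigenvalueSums

variable [DecidableEq n]

lemma re_trace_sub_eq_sum (hA : A.IsHermitian) (hB : B.IsHermitian) :
    (A - B).trace.re = ∑ i, ∑ j, (hA.eigenvalues i - hB.eigenvalues j) *
      Complex.normSq (eigenCoord hA hB 1 i j) := by
  have hA₁ := re_trace_cfc_mul_cfc hA hB (fun x => x) (fun _ => 1)
  have hB₁ := re_trace_cfc_mul_cfc hA hB (fun _ => 1) (fun x => x)
  rw [cfc_id' ℝ A, cfc_const_one ℝ B, mul_one] at hA₁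
  rw [cfc_id' ℝ B, cfc_const_one ℝ A, one_mul] at hB₁
  simp only [trace_sub, Complex.sub_re, hA₁, hB₁, ← Finset.sum_sub_distrib, sub_mul, mul_one,
    one_mul]

lemma relEntropy_eq_sum (hA : A.IsHermitian) (hB : B.IsHermitian) :
    relEntropy A B = ∑ i, ∑ j, hA.eigenvalues i *
      (Real.log (hA.eigenvalues i) - Real.log (hB.eigenvalues j)) *
        Complex.normSq (eigenCoord hA hB 1 i j) := by
  have hAA := re_trace_cfc_mul_cfc hA hB (fun x => x * Real.log x) (fun _ => 1)
  have hAB := re_trace_cfc_mul_cfc hA hB (fun x => x) Real.log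
  rw [cfc_const_one ℝ B, mul_one, ← mul_cfc_log hA] at hAA
  rw [cfc_id' ℝ A] at hAB
  simp only [relEntropy, mul_sub, trace_sub, Complex.sub_re, hAA, hAB, ← Finset.sum_sub_distrib,
    sub_mul, mul_one]

lemma one_sub_mul_chiSqDiv_eq_sum (hA : A.PosSemidef) (hB : B.PosSemidef) {s : ℝ}
    (hs : s ∈ Set.Ioo (0 : ℝ) 1) :
    (1 - s) * chiSqDiv s A B = ∑ i, ∑ j, (1 - s) *
      ((hA.1.eigenvalues i - hB.1.eigenvalues j) ^ 2 /
        (s * hA.1.eigenvalues i + (1 - s) * hB.1.eigenvalues j)) *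
          Complex.normSq (eigenCoord hA.1 hB.1 1 i j) := by
  simp only [chiSqDiv_eq_sum hA hB hs, Finset.mul_sum, mul_assoc]

lemma intervalIntegrable_one_sub_mul_chiSqDiv_term (hP : P ∈ dominatedPairs n) (i j : n) :
    IntervalIntegrable (fun s => (1 - s) *
      ((hP.1.1.eigenvalues i - hP.2.1.1.eigenvalues j) ^ 2 /
        (s * hP.1.1.eigenvalues i + (1 - s) * hP.2.1.1.eigenvalues j)) *
          Complex.normSq (eigenCoord hP.1.1 hP.2.1.1 1 i j)) volume 0 1 := by
  by_cases h : eigenCoord hP.1.1 hP.2.1.1 1 i j = 0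
  · simp [h]
  · exact (intervalIntegrable_one_sub_mul_sq_div (hP.1.eigenvalues_nonneg i)
      (hP.2.1.eigenvalues_nonneg j)
      (eigenvalues_eq_zero_of_eigenCoord_one_ne_zero _ _ hP.2.2 h)).mul_const _

lemma integral_one_sub_mul_chiSqDiv_term (hP : P ∈ dominatedPairs n) (i j : n) :
    ∫ s in (0 : ℝ)..1, (1 - s) *
      ((hP.1.1.eigenvalues i - hP.2.1.1.eigenvalues j) ^ 2 /
        (s * hP.1.1.eigenvalues i + (1 - s) * hP.2.1.1.eigenvalues j)) *
          Complex.normSq (eigenCoord hP.1.1 hP.2.1.1 1 i j) =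
      (hP.1.1.eigenvalues i *
          (Real.log (hP.1.1.eigenvalues i) - Real.log (hP.2.1.1.eigenvalues j)) -
        (hP.1.1.eigenvalues i - hP.2.1.1.eigenvalues j)) *
          Complex.normSq (eigenCoord hP.1.1 hP.2.1.1 1 i j) := by
  by_cases h : eigenCoord hP.1.1 hP.2.1.1 1 i j = 0
  · simp [h]
  · rw [intervalIntegral.integral_mul_const, integral_one_sub_mul_sq_div
      (hP.1.eigenvalues_nonneg i) (hP.2.1.eigenvalues_nonneg j)
      (eigenvalues_eq_zero_of_eigenCoord_one_ne_zero _ _ hP.2.2 h)]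

end EigenvalueSums

lemma intervalIntegrable_one_sub_mul_chiSqDiv (hP : P ∈ dominatedPairs n) :
    IntervalIntegrable (fun s => (1 - s) * chiSqDiv s P.1 P.2) volume 0 1 := by
  classical
  refine (IntervalIntegrable.sum Finset.univ fun i _ => IntervalIntegrable.sum Finset.univ
    fun j _ => intervalIntegrable_one_sub_mul_chiSqDiv_term hP i j).congr_uIoo fun s hs => ?_
  rw [Set.uIoo_of_le zero_le_one] at hs
  simp only [one_sub_mul_chiSqDiv_eq_sum hP.1 hP.2.1 hs, Finset.sum_apply]

variable [DecidableEq n]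

lemma relEntropy_eq_integral (hP : P ∈ dominatedPairs n) : relEntropy P.1 P.2 =
    (P.1 - P.2).trace.re + ∫ s in (0 : ℝ)..1, (1 - s) * chiSqDiv s P.1 P.2 := by
  have hterm := intervalIntegrable_one_sub_mul_chiSqDiv_term hP
  rw [intervalIntegral.integral_congr_Ioo_of_le zero_le_one fun s hs =>
      one_sub_mul_chiSqDiv_eq_sum hP.1 hP.2.1 hs,
    intervalIntegral.integral_finsetSum fun i _ => by
      simpa only [Finset.sum_fn] using IntervalIntegrable.sum Finset.univ fun j _ => hterm i j,
    relEntropy_eq_sum hP.1.1 hP.2.1.1, re_trace_sub_eq_sum hP.1.1 hP.2.1.1,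
    ← Finset.sum_add_distrib]
  refine Finset.sum_congr rfl fun i _ => ?_
  rw [intervalIntegral.integral_finsetSum fun j _ => hterm i j, ← Finset.sum_add_distrib]
  refine Finset.sum_congr rfl fun j _ => ?_
  rw [integral_one_sub_mul_chiSqDiv_term hP]
  ring

theorem convexOn_relEntropy :
    ConvexOn ℝ (dominatedPairs n) fun P => relEntropy P.1 P.2 := by
  refine ⟨convex_dominatedPairs, fun P hP Q hQ p q hp hq hpq => ?_⟩
  have hPQ := convex_dominatedPairs hP hQ hp hq hpq
  have iP := intervalIntegrable_one_sub_mul_chiSqDiv hP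
  have iQ := intervalIntegrable_one_sub_mul_chiSqDiv hQ
  have trace_eq : ((p • P + q • Q).1 - (p • P + q • Q).2).trace.re =
      p * (P.1 - P.2).trace.re + q * (Q.1 - Q.2).trace.re := by
    simp only [Prod.fst_add, Prod.smul_fst, Prod.snd_add, Prod.smul_snd, trace_sub, trace_add,
      trace_smul, Complex.real_smul, Complex.sub_re, Complex.add_re, Complex.mul_re,
      Complex.ofReal_re, Complex.ofReal_im, zero_mul, sub_zero]
    ring
  have integral_le : ∫ s in (0 : ℝ)..1, (1 - s) * chiSqDiv s (p • P + q • Q).1 (p • P + q • Q).2 ≤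
      p * (∫ s in (0 : ℝ)..1, (1 - s) * chiSqDiv s P.1 P.2) +
        q * ∫ s in (0 : ℝ)..1, (1 - s) * chiSqDiv s Q.1 Q.2 := by
    rw [← intervalIntegral.integral_const_mul, ← intervalIntegral.integral_const_mul,
      ← intervalIntegral.integral_add (iP.const_mul p) (iQ.const_mul q)]
    refine intervalIntegral.integral_mono_on_of_le_Ioo zero_le_one
      (intervalIntegrable_one_sub_mul_chiSqDiv hPQ)
      ((iP.const_mul p).add (iQ.const_mul q)) fun s hs => ?_
    have h := mul_le_mul_of_nonneg_left ((convexOn_chiSqDiv hs).2 ⟨hP.1, hP.2.1⟩ ⟨hQ.1, hQ.2.1⟩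
      hp hq hpq) (sub_nonneg.2 hs.2.le)
    rw [smul_eq_mul, smul_eq_mul] at h
    linarith
  simp only [smul_eq_mul, relEntropy_eq_integral hP, relEntropy_eq_integral hQ,
    relEntropy_eq_integral hPQ, trace_eq]
  linarith

end RelativeEntropy

section Entropy

variable {m n : Type*}

lemma isHermitian_kronecker {R : Type*} [CommMagma R] [StarMul R] {A : Matrix m m R}
    {B : Matrix n n R} (hA : A.IsHermitian) (hB : B.IsHermitian) : (A ⊗ₖ B).IsHermitian := by
  rw [IsHermitian, conjTranspose_kronecker, hA.eq, hB.eq]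

variable [Fintype m] [DecidableEq m] [Fintype n] [DecidableEq n]

lemma sum_comp_eigenvalues_of_charpoly_eq {A : Matrix n n ℂ} (hA : A.IsHermitian) {x : m → ℝ}
    (h : A.charpoly = (diagonal fun i => (x i : ℂ)).charpoly) (f : ℝ → ℝ) :
    ∑ i, f (hA.eigenvalues i) = ∑ i, f (x i) := by
  have hroots : (diagonal fun i => (x i : ℂ)).charpoly.roots =
      Finset.univ.val.map fun i => (x i : ℂ) := by
    rw [charpoly_diagonal, ← Polynomial.roots_multiset_prod_X_sub_C (Finset.univ.val.map _),
      Multiset.map_map]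
    rfl
  have hmap := congrArg (Multiset.map Complex.re) hA.roots_charpoly_eq_eigenvalues
  rw [h, hroots] at hmap
  simp only [Multiset.map_map] at hmap
  have hsum := congrArg (fun s => (s.map f).sum) hmap
  simp only [Multiset.map_map] at hsum
  exact hsum.symm

lemma vnEnt_eq_of_charpoly_eq {A : Matrix n n ℂ} (hA : A.IsHermitian) {x : m → ℝ}
    (h : A.charpoly = (diagonal fun i => (x i : ℂ)).charpoly) :
    vnEnt A = ∑ i, Real.negMulLog (x i) - Real.negMulLog (∑ i, x i) := by
  rw [vnEnt, dif_pos hA, sum_comp_eigenvalues_of_charpoly_eq hA h,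
    sum_comp_eigenvalues_of_charpoly_eq hA h fun t => t]

lemma charpoly_eq_charpoly_diagonal {A : Matrix n n ℂ} (hA : A.IsHermitian) :
    A.charpoly = (diagonal fun i => (hA.eigenvalues i : ℂ)).charpoly := by
  rw [hA.charpoly_eq, charpoly_diagonal]
  rfl

lemma vnEnt_submatrix_equiv {A : Matrix n n ℂ} (hA : A.IsHermitian) (e : m ≃ n) :
    vnEnt (A.submatrix e e) = vnEnt A := by
  have hc : (A.submatrix e e).charpoly = (diagonal fun i => (hA.eigenvalues i : ℂ)).charpoly := by
    rw [← charpoly_eq_charpoly_diagonal hA, ← charpoly_reindex e.symm A, reindex_apply,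
      Equiv.symm_symm]
  rw [vnEnt_eq_of_charpoly_eq (hA.submatrix e) hc, vnEnt, dif_pos hA]

lemma charpoly_kronecker {A : Matrix m m ℂ} {B : Matrix n n ℂ} (hA : A.IsHermitian)
    (hB : B.IsHermitian) : (A ⊗ₖ B).charpoly =
      (diagonal fun i : m × n =>
        ((hA.eigenvalues i.1 * hB.eigenvalues i.2 : ℝ) : ℂ)).charpoly := by
  set U := (hA.eigenvectorUnitary : Matrix m m ℂ)
  set V := (hB.eigenvectorUnitary : Matrix n n ℂ)
  have hUV : (star U ⊗ₖ star V) * (U ⊗ₖ V) = 1 := by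
    rw [← mul_kronecker_mul, Unitary.coe_star_mul_self, Unitary.coe_star_mul_self,
      one_kronecker_one]
  conv_lhs => rw [hA.spectral_theorem, hB.spectral_theorem, Unitary.conjStarAlgAut_apply,
    Unitary.conjStarAlgAut_apply, mul_kronecker_mul, mul_kronecker_mul, charpoly_mul_comm,
    ← mul_assoc, hUV, one_mul, diagonal_kronecker_diagonal]
  simp

lemma vnEnt_kronecker {A : Matrix m m ℂ} {B : Matrix n n ℂ} (hA : A.IsHermitian)
    (hB : B.IsHermitian) :
    vnEnt (A ⊗ₖ B) = B.trace.re * vnEnt A + A.trace.re * vnEnt B := by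
  rw [vnEnt_eq_of_charpoly_eq (isHermitian_kronecker hA hB) (charpoly_kronecker hA hB), vnEnt,
    dif_pos hA, vnEnt, dif_pos hB, re_trace_eq_sum_eigenvalues hA, re_trace_eq_sum_eigenvalues hB]
  simp only [Fintype.sum_prod_type, Real.negMulLog_mul, Finset.sum_add_distrib,
    ← Finset.sum_mul, ← Finset.mul_sum]
  ring

lemma vnEnt_eq_re_trace {ρ : Matrix n n ℂ} (hρ : ρ.IsHermitian) :
    vnEnt ρ = -(ρ * cfc Real.log ρ).trace.re - Real.negMulLog ρ.trace.re := by
  simp only [vnEnt, dif_pos hρ, mul_cfc_log hρ, re_trace_cfc hρ, re_trace_eq_sum_eigenvalues hρ,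
    Real.negMulLog, neg_mul, Finset.sum_neg_distrib]

/-- The unital embedding `X ↦ 1 ⊗ X` of the operators on a tensor factor. -/
def oneKroneckerStarAlgHom (m n : Type*) [Fintype m] [DecidableEq m] [Fintype n]
    [DecidableEq n] : Matrix n n ℂ →⋆ₐ[ℝ] Matrix (m × n) (m × n) ℂ where
  toFun X := (1 : Matrix m m ℂ) ⊗ₖ X
  map_one' := one_kronecker_one
  map_mul' X Y := by rw [← mul_kronecker_mul, one_mul]
  map_zero' := kronecker_zero _
  map_add' := kronecker_add _
  commutes' r := by simp [Algebra.algebraMap_eq_smul_one, kronecker_smul]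
  map_star' X := by simp [star_eq_conjTranspose, conjTranspose_kronecker]

lemma cfc_one_kronecker (f : ℝ → ℝ) {X : Matrix n n ℂ} (hX : X.IsHermitian) :
    cfc f ((1 : Matrix m m ℂ) ⊗ₖ X) = (1 : Matrix m m ℂ) ⊗ₖ cfc f X := by
  have hcont : Continuous (oneKroneckerStarAlgHom m n) := by
    refine continuous_matrix fun i j => ?_
    exact continuous_const.mul (continuous_id.matrix_elem _ _)
  exact ((oneKroneckerStarAlgHom m n).map_cfc f X (finite_real_spectrum.continuousOn _)
    hcont hX (isHermitian_kronecker isHermitian_one hX)).symm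

end Entropy

section ConditionalEntropy

variable {m n : Type*} [Fintype m] [DecidableEq m] [Fintype n]

lemma mk_one_kronecker_traceLeft_mem_dominatedPairs {ρ : Matrix (m × n) (m × n) ℂ}
    (hρ : ρ.PosSemidef) :
    (ρ, (1 : Matrix m m ℂ) ⊗ₖ traceLeft ρ) ∈ dominatedPairs (m × n) :=
  ⟨hρ, PosSemidef.one.kronecker (posSemidef_traceLeft hρ),
    fun _ => mulVec_eq_zero_of_one_kronecker_traceLeft hρ⟩

variable [DecidableEq n]

/-- The conditional entropy `H(A|B) = H(AB) - H(B)` of an operator on `A ⊗ B`. -/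
def condEnt (ρ : Matrix (m × n) (m × n) ℂ) : ℝ :=
  vnEnt ρ - vnEnt (traceLeft ρ)

lemma condEnt_eq_neg_relEntropy {ρ : Matrix (m × n) (m × n) ℂ} (hρ : ρ.PosSemidef) :
    condEnt ρ = -relEntropy ρ (1 ⊗ₖ traceLeft ρ) := by
  have hright := (posSemidef_traceLeft hρ).1
  rw [condEnt, vnEnt_eq_re_trace hρ.1, vnEnt_eq_re_trace hright, trace_traceLeft,
    ← traceLeft_mul_one_kronecker, trace_traceLeft, relEntropy, cfc_one_kronecker _ hright,
    mul_sub, trace_sub, Complex.sub_re]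
  ring

theorem concaveOn_condEnt :
    ConcaveOn ℝ {ρ : Matrix (m × n) (m × n) ℂ | ρ.PosSemidef} condEnt := by
  have convex : Convex ℝ {ρ : Matrix (m × n) (m × n) ℂ | ρ.PosSemidef} :=
    fun ρ hρ σ hσ p q hp hq _ => (hρ.smul hp).add (hσ.smul hq)
  refine ⟨convex, fun ρ hρ σ hσ p q hp hq hpq => ?_⟩
  have h := convexOn_relEntropy.2 (mk_one_kronecker_traceLeft_mem_dominatedPairs hρ)
    (mk_one_kronecker_traceLeft_mem_dominatedPairs hσ) hp hq hpq
  simp only [Prod.smul_mk, Prod.mk_add_mk, ← kronecker_smul, ← kronecker_add, ← traceLeft_smul,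
    ← traceLeft_add, smul_eq_mul] at h
  rw [condEnt_eq_neg_relEntropy hρ, condEnt_eq_neg_relEntropy hσ,
    condEnt_eq_neg_relEntropy (convex hρ hσ hp hq hpq), smul_eq_mul, smul_eq_mul]
  linarith

end ConditionalEntropy

section Tripartite

lemma IsState.submatrix {m n : Type*} [Fintype m] [Fintype n] {ρ : Matrix n n ℂ}
    (hρ : IsState ρ) (e : m ≃ n) : IsState (ρ.submatrix e e) :=
  ⟨hρ.1.submatrix e, (Equiv.sum_comp e ρ.diag).trans hρ.2⟩

lemma IsState.traceLeft {m n : Type*} [Fintype m] [Fintype n]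
    {ρ : Matrix (m × n) (m × n) ℂ} (hρ : IsState ρ) : IsState (_root_.traceLeft ρ) :=
  ⟨posSemidef_traceLeft hρ.1, (trace_traceLeft ρ).trans hρ.2⟩

lemma IsState.kronecker {m n : Type*} [Fintype m] [Fintype n]
    {ρ : Matrix m m ℂ} {σ : Matrix n n ℂ} (hρ : IsState ρ) (hσ : IsState σ) :
    IsState (ρ ⊗ₖ σ) :=
  ⟨hρ.1.kronecker hσ.1, by rw [trace_kronecker, hρ.2, hσ.2, one_mul]⟩

variable {a b c : Type*}

lemma mAB_eq_traceLeft [Fintype c] (ω : Matrix (a × b × c) (a × b × c) ℂ) :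
    mAB ω = traceLeft (ω.submatrix ((Equiv.prodComm c (a × b)).trans (Equiv.prodAssoc a b c))
      ((Equiv.prodComm c (a × b)).trans (Equiv.prodAssoc a b c))) := rfl

lemma mAB_smul_add_smul [Fintype c] (p q : ℝ) (ω σ : Matrix (a × b × c) (a × b × c) ℂ) :
    mAB (p • ω + q • σ) = p • mAB ω + q • mAB σ := by
  simp only [mAB_eq_traceLeft, ← traceLeft_smul, ← traceLeft_add]
  rfl

lemma mC_eq_traceLeft_mBC [Fintype a] [Fintype b] (ω : Matrix (a × b × c) (a × b × c) ℂ) :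
    mC ω = traceLeft (mBC ω) := by
  ext i j
  exact Finset.sum_comm

variable [Fintype a] [Fintype b] [Fintype c] {ω : Matrix (a × b × c) (a × b × c) ℂ}

lemma IsState.mAB (hω : IsState ω) : IsState (_root_.mAB ω) := by
  rw [mAB_eq_traceLeft]
  exact (hω.submatrix _).traceLeft

lemma IsState.mB (hω : IsState ω) : IsState (_root_.mB ω) :=
  hω.mAB.traceLeft

lemma IsState.mC (hω : IsState ω) : IsState (_root_.mC ω) := by
  rw [mC_eq_traceLeft_mBC]
  exact hω.traceLeft.traceLeft

variable [DecidableEq a] [DecidableEq b] [DecidableEq c]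

lemma prodABC_eq_submatrix (ω : Matrix (a × b × c) (a × b × c) ℂ) :
    prodABC ω = (mAB ω ⊗ₖ mC ω).submatrix (Equiv.prodAssoc a b c).symm
      (Equiv.prodAssoc a b c).symm := rfl

lemma IsState.prodABC (hω : IsState ω) : IsState (_root_.prodABC ω) := by
  rw [prodABC_eq_submatrix]
  exact (hω.mAB.kronecker hω.mC).submatrix _

lemma mAB_prodABC (hω : IsState ω) : mAB (prodABC ω) = mAB ω := by
  have h : mAB (prodABC ω) = (mC ω).trace • mAB ω := by
    ext p q
    simp [mAB, prodABC, trace, mul_comm (∑ i, mC ω i i), ← Finset.mul_sum]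
  rw [h, hω.mC.2, one_smul]

lemma mBC_prodABC (ω : Matrix (a × b × c) (a × b × c) ℂ) :
    mBC (prodABC ω) = mB ω ⊗ₖ mC ω := by
  ext p q
  simp [mBC, prodABC, mAB, mB, Finset.sum_mul]

lemma cmi_eq_condEnt_sub_condEnt (ω : Matrix (a × b × c) (a × b × c) ℂ) :
    cmi ω = condEnt (mAB ω) - condEnt ω := by
  have hB : mB ω = traceLeft (mAB ω) := rfl
  have hBC : mBC ω = traceLeft ω := rfl
  rw [cmi, condEnt, condEnt, hB, hBC]
  ring

lemma convexOn_cmi (σ : Matrix (a × b) (a × b) ℂ) :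
    ConvexOn ℝ {ω : Matrix (a × b × c) (a × b × c) ℂ | ω.PosSemidef ∧ mAB ω = σ} cmi := by
  have convex : Convex ℝ {ω : Matrix (a × b × c) (a × b × c) ℂ | ω.PosSemidef ∧ mAB ω = σ} := by
    rintro ω ⟨hω, hωσ⟩ τ ⟨hτ, hτσ⟩ p q hp hq hpq
    refine ⟨(hω.smul hp).add (hτ.smul hq), ?_⟩
    rw [mAB_smul_add_smul, hωσ, hτσ, ← add_smul, hpq, one_smul]
  refine ((convexOn_const (condEnt σ) convex).sub
    (concaveOn_condEnt.subset (fun _ hω => hω.1) convex)).congr fun ω hω => ?_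
  rw [cmi_eq_condEnt_sub_condEnt, hω.2]
  rfl

lemma cmi_prodABC (hω : IsState ω) : cmi (prodABC ω) = 0 := by
  have hB : mB (prodABC ω) = mB ω := congrArg traceLeft (mAB_prodABC hω)
  rw [cmi, hB, mAB_prodABC hω, mBC_prodABC, prodABC_eq_submatrix,
    vnEnt_submatrix_equiv (isHermitian_kronecker hω.mAB.1.1 hω.mC.1.1),
    vnEnt_kronecker hω.mAB.1.1 hω.mC.1.1, vnEnt_kronecker hω.mB.1.1 hω.mC.1.1,
    hω.mAB.2, hω.mB.2, hω.mC.2]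
  simp

end Tripartite

/-- For `ω^ε = (1−ε)ω + ε·ω_AB ⊗ ω_C` one has `I(A:C|B)_{ω^ε} ≤ (1−ε)I(A:C|B)_ω`. -/
theorem cmi_perturbation_le {a b c : Type*} [Fintype a] [DecidableEq a] [Fintype b]
    [DecidableEq b] [Fintype c] [DecidableEq c]
    (ω : Matrix (a × b × c) (a × b × c) ℂ) (hω : IsState ω)
    (ε : ℝ) (h0 : 0 < ε) (h1 : ε < 1) :
    cmi ((1 - ε) • ω + ε • prodABC ω) ≤ (1 - ε) * cmi ω := by
  have hmem : ω ∈ {τ | τ.PosSemidef ∧ mAB τ = mAB ω} := ⟨hω.1, rfl⟩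
  have hprod : prodABC ω ∈ {τ | τ.PosSemidef ∧ mAB τ = mAB ω} :=
    ⟨hω.prodABC.1, mAB_prodABC hω⟩
  calc cmi ((1 - ε) • ω + ε • prodABC ω)
      ≤ (1 - ε) • cmi ω + ε • cmi (prodABC ω) :=
        (convexOn_cmi (mAB ω)).2 hmem hprod (sub_nonneg.2 h1.le) h0.le (sub_add_cancel 1 ε)
    _ = (1 - ε) * cmi ω := by rw [cmi_prodABC hω, smul_zero, add_zero, smul_eq_mul]
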